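/- L∞ bound for the time reconstruction error via interpolation (used in the proof of Lemma 5.2, bound on T₈): the time reconstruction Û satisfies sup_{t ∈ [t₀,t₁]} ‖V(t) − Û(t)‖²_H ≤ (∫_I ‖V(t) − Û(t)‖²_H dt)^{1/2} · (∫_I ‖V'(t) − Û'(t)‖²_H dt)^{1/2}, and consequently sup_{t ∈ [t₀,t₁]} ‖V(t) − Û(t)‖_H ≤ (c₁(q)·c₂(q))^{1/2} · τ · ‖j‖_H. -/

import Mathlib

open scoped RealInnerProductSpace
open MeasureTheory

/-- Evaluation of the `H`-valued polynomial with coefficients `c` (degree at most `k`):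
`t ↦ ∑_{i=0}^{k} tⁱ • c i`. -/
noncomputable def polyEval {H : Type*} [NormedAddCommGroup H] [NormedSpace ℝ H]
    (k : ℕ) (c : ℕ → H) (t : ℝ) : H :=
  ∑ i ∈ Finset.range (k + 1), t ^ i • c i

/-- Coefficients of the termwise derivative of the polynomial with coefficients `c`. -/
noncomputable def dC {H : Type*} [NormedAddCommGroup H] [NormedSpace ℝ H]
    (c : ℕ → H) : ℕ → H := fun i => ((i : ℝ) + 1) • c (i + 1)

/-- `u` is the coefficient function of the time reconstruction `Û` (a polynomial of degree at
most `q+1`) of the polynomial `V` with coefficient function `v` (degree at most `q`), with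
jump `j`, on the interval `I = [t₀, t₁]`:
(i) `∫_I ⟨Û'' - V'', W⟩ = ⟨j, W(t₀)⟩` for all `H`-valued polynomials `W` of degree at most `q-1`;
(ii) `Û(t₀) = V(t₀)`; (iii) `Û'(t₀) = V'(t₀) - j`. -/
def IsTimeRecon {H : Type*} [NormedAddCommGroup H] [InnerProductSpace ℝ H]
    (t₀ t₁ : ℝ) (q : ℕ) (v : ℕ → H) (j : H) (u : ℕ → H) : Prop :=
  (∀ i, q + 1 < i → u i = 0) ∧
  (∀ w : ℕ → H, (∀ i, q ≤ i → w i = 0) →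
    (∫ t in t₀..t₁,
        ⟪polyEval (q + 1) (dC (dC u)) t - polyEval (q + 1) (dC (dC v)) t,
          polyEval (q + 1) w t⟫) = ⟪j, polyEval (q + 1) w t₀⟫) ∧
  polyEval (q + 1) u t₀ = polyEval (q + 1) v t₀ ∧
  polyEval (q + 1) (dC u) t₀ = polyEval (q + 1) (dC v) t₀ - j

/-- `c₁(q) = √(q / ((2q-1)(2q+1)))`. -/
noncomputable def c1 (q : ℕ) : ℝ :=
  Real.sqrt ((q : ℝ) / ((2 * (q : ℝ) - 1) * (2 * (q : ℝ) + 1)))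

/-- `c₂(q) = √(q / (4(q-2)(q-1)(2q-1)(2q+1)))` for `q ≥ 3`, and `c₂(2) = √(1/15)`. -/
noncomputable def c2 (q : ℕ) : ℝ :=
  if q = 2 then Real.sqrt (1 / 15)
  else Real.sqrt
    ((q : ℝ) / (4 * ((q : ℝ) - 2) * ((q : ℝ) - 1) * (2 * (q : ℝ) - 1) * (2 * (q : ℝ) + 1)))

/-!
On the interval `[0, 1]` the error `e = V - Û` solves a scalar problem times `j`: `e(0) = 0`,
`e'(0) = 1` and `∫ e'' w = -w(0)` for `w` of degree below `q`. After integration by parts, `e'` is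
the combination `(P_{q-1} + P_q) / 2` of shifted Legendre polynomials, and the recurrence
`(Pₘ - Pₘ₊₂)' = 2(2m + 3) Pₘ₊₁` gives `e`. Orthogonality then yields both `L²` norms in closed form,
with `∫ e'² = c₁(q)²` and `∫ e² ≤ c₂(q)²`. Because `e` vanishes at both endpoints, the fundamental
theorem of calculus for `‖e‖²` from either side and the Cauchy–Schwarz inequality bound `sup ‖e‖²`
by the product of these norms.
-/

section Agmon

theorem integral_mul_le_sqrt_mul_sqrt {a b : ℝ} (hab : a ≤ b) {f g : ℝ → ℝ}
    (hf : ContinuousOn f (Set.Icc a b)) (hg : ContinuousOn g (Set.Icc a b)) :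
    ∫ x in a..b, f x * g x ≤ √(∫ x in a..b, f x ^ 2) * √(∫ x in a..b, g x ^ 2) := by
  have memLp_two {φ : ℝ → ℝ} (hφ : ContinuousOn φ (Set.Icc a b)) :
      MemLp φ (ENNReal.ofReal 2) (volume.restrict (Set.Ioc a b)) := by
    rw [ENNReal.ofReal_ofNat]
    refine (memLp_two_iff_integrable_sq ?_).2 ?_
    · exact (hφ.mono Set.Ioc_subset_Icc_self).aestronglyMeasurable measurableSet_Ioc
    · exact (hφ.pow 2).integrableOn_Icc.mono_set Set.Ioc_subset_Icc_self
  calc ∫ x in a..b, f x * g x ≤ ∫ x in a..b, ‖f x‖ * ‖g x‖ :=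
        intervalIntegral.integral_mono_on hab ((hf.mul hg).intervalIntegrable_of_Icc hab)
          ((hf.norm.mul hg.norm).intervalIntegrable_of_Icc hab)
          fun x _ => (le_abs_self _).trans_eq (abs_mul _ _)
    _ ≤ _ := by
        simpa only [intervalIntegral.integral_of_le hab, Real.sqrt_eq_rpow, Real.rpow_ofNat,
            Real.norm_eq_abs, sq_abs] using
          integral_mul_norm_le_Lp_mul_Lq Real.HolderConjugate.two_two (memLp_two hf) (memLp_two hg)

variable {H : Type*} [NormedAddCommGroup H] [InnerProductSpace ℝ H]
  {a b : ℝ} {f f' : ℝ → H}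

theorem abs_norm_sq_sub_norm_sq_le_two_mul_integral (hab : a ≤ b)
    (hf : ContinuousOn f (Set.Icc a b)) (hderiv : ∀ x ∈ Set.Ioo a b, HasDerivAt f (f' x) x)
    (hf' : ContinuousOn f' (Set.Icc a b)) :
    |‖f b‖ ^ 2 - ‖f a‖ ^ 2| ≤ 2 * ∫ x in a..b, ‖f x‖ * ‖f' x‖ := by
  have hinner : ContinuousOn (fun x => 2 * ⟪f x, f' x⟫) (Set.uIcc a b) := by
    rw [Set.uIcc_of_le hab]
    exact continuousOn_const.mul (hf.inner hf')
  have hnorm : ContinuousOn (fun x => ‖f x‖ * ‖f' x‖) (Set.uIcc a b) := by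
    rw [Set.uIcc_of_le hab]
    exact hf.norm.mul hf'.norm
  have hFTC : ∫ x in a..b, 2 * ⟪f x, f' x⟫ = ‖f b‖ ^ 2 - ‖f a‖ ^ 2 :=
    intervalIntegral.integral_eq_sub_of_hasDerivAt_of_le hab (hf.norm.pow 2)
      (fun x hx => (hderiv x hx).norm_sq) hinner.intervalIntegrable
  rw [← hFTC, ← intervalIntegral.integral_const_mul]
  refine (intervalIntegral.abs_integral_le_integral_abs hab).trans
    (intervalIntegral.integral_mono_on hab hinner.abs.intervalIntegrable
      (hnorm.intervalIntegrable.const_mul 2) fun x _ => ?_)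
  rw [abs_mul, abs_two]
  gcongr
  exact abs_real_inner_le_norm _ _

theorem norm_sq_le_sqrt_integral_mul_sqrt_integral
    (hf : ContinuousOn f (Set.Icc a b)) (hderiv : ∀ x ∈ Set.Ioo a b, HasDerivAt f (f' x) x)
    (hf' : ContinuousOn f' (Set.Icc a b)) (ha : f a = 0) (hb : f b = 0)
    {t : ℝ} (ht : t ∈ Set.Icc a b) :
    ‖f t‖ ^ 2 ≤ √(∫ x in a..b, ‖f x‖ ^ 2) * √(∫ x in a..b, ‖f' x‖ ^ 2) := by
  have hleft : Set.Icc a t ⊆ Set.Icc a b := Set.Icc_subset_Icc_right ht.2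
  have hright : Set.Icc t b ⊆ Set.Icc a b := Set.Icc_subset_Icc_left ht.1
  have from_left := abs_norm_sq_sub_norm_sq_le_two_mul_integral ht.1 (hf.mono hleft)
    (fun x hx => hderiv x (Set.Ioo_subset_Ioo_right ht.2 hx)) (hf'.mono hleft)
  have from_right := abs_norm_sq_sub_norm_sq_le_two_mul_integral ht.2 (hf.mono hright)
    (fun x hx => hderiv x (Set.Ioo_subset_Ioo_left ht.1 hx)) (hf'.mono hright)
  have hadd : (∫ x in a..t, ‖f x‖ * ‖f' x‖) + (∫ x in t..b, ‖f x‖ * ‖f' x‖) =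
      ∫ x in a..b, ‖f x‖ * ‖f' x‖ := by
    have hnorm := hf.norm.mul hf'.norm
    exact intervalIntegral.integral_add_adjacent_intervals
      ((hnorm.mono hleft).intervalIntegrable_of_Icc ht.1)
      ((hnorm.mono hright).intervalIntegrable_of_Icc ht.2)
  rw [ha, norm_zero] at from_left
  rw [hb, norm_zero] at from_right
  -- The two one-sided bounds for `‖f t‖²` add up to a single integral over `[a, b]`.
  calc ‖f t‖ ^ 2 ≤ ∫ x in a..b, ‖f x‖ * ‖f' x‖ := by
        linarith [le_abs_self (‖f t‖ ^ 2 - 0 ^ 2), neg_le_abs (0 ^ 2 - ‖f t‖ ^ 2)]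
    _ ≤ _ := integral_mul_le_sqrt_mul_sqrt (ht.1.trans ht.2) hf.norm hf'.norm

theorem iSup_norm_sq_le_sqrt_mul_sqrt (hab : a ≤ b)
    (hf : ContinuousOn f (Set.Icc a b)) (hderiv : ∀ x ∈ Set.Ioo a b, HasDerivAt f (f' x) x)
    (hf' : ContinuousOn f' (Set.Icc a b)) (ha : f a = 0) (hb : f b = 0) :
    (⨆ t : Set.Icc a b, ‖f t‖) ^ 2 ≤
      √(∫ x in a..b, ‖f x‖ ^ 2) * √(∫ x in a..b, ‖f' x‖ ^ 2) := by
  have : Nonempty (Set.Icc a b) := Set.nonempty_Icc_subtype hab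
  rw [← Real.le_sqrt (Real.iSup_nonneg fun _ => norm_nonneg _) (by positivity)]
  exact ciSup_le fun t => Real.le_sqrt_of_sq_le
    (norm_sq_le_sqrt_integral_mul_sqrt_integral hf hderiv hf' ha hb t.2)

end Agmon

section Legendre

open Polynomial Nat

/-- The `L²(0, 1)` inner product on real polynomials. -/
noncomputable def unitIntervalInner : LinearMap.BilinForm ℝ ℝ[X] :=
  LinearMap.mk₂ ℝ (fun p r => ∫ x in (0 : ℝ)..1, p.eval x * r.eval x)
    (fun p₁ p₂ r => by
      simp only [eval_add, add_mul]
      exact intervalIntegral.integral_add ((by fun_prop : Continuous _).intervalIntegrable _ _)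
        ((by fun_prop : Continuous _).intervalIntegrable _ _))
    (fun c p r => by simp [mul_assoc])
    (fun p r₁ r₂ => by
      simp only [eval_add, mul_add]
      exact intervalIntegral.integral_add ((by fun_prop : Continuous _).intervalIntegrable _ _)
        ((by fun_prop : Continuous _).intervalIntegrable _ _))
    (fun c p r => by simp [mul_left_comm])

theorem unitIntervalInner_apply (p r : ℝ[X]) :
    unitIntervalInner p r = ∫ x in (0 : ℝ)..1, p.eval x * r.eval x := rfl

theorem unitIntervalInner_comm (p r : ℝ[X]) : unitIntervalInner p r = unitIntervalInner r p := by
  simp only [unitIntervalInner_apply, mul_comm]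

theorem unitIntervalInner_derivative_left (p r : ℝ[X]) :
    unitIntervalInner (derivative p) r =
      p.eval 1 * r.eval 1 - p.eval 0 * r.eval 0 - unitIntervalInner p (derivative r) := by
  simp only [unitIntervalInner_apply]
  linarith [intervalIntegral.integral_mul_deriv_eq_deriv_mul (a := 0) (b := 1)
    (fun x _ => p.hasDerivAt x) (fun x _ => r.hasDerivAt x)
    ((derivative p).continuous.intervalIntegrable _ _)
    ((derivative r).continuous.intervalIntegrable _ _)]

theorem unitIntervalInner_iterate_derivative_left {n : ℕ} {p : ℝ[X]}
    (h0 : ∀ m < n, (derivative^[m] p).eval 0 = 0) (h1 : ∀ m < n, (derivative^[m] p).eval 1 = 0)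
    (r : ℝ[X]) :
    unitIntervalInner (derivative^[n] p) r =
      (-1) ^ n * unitIntervalInner p (derivative^[n] r) := by
  induction n generalizing r with
  | zero => simp
  | succ n ih =>
    rw [Function.iterate_succ_apply', unitIntervalInner_derivative_left, h0 n n.lt_succ_self,
      h1 n n.lt_succ_self, ih (fun m hm => h0 m (hm.trans n.lt_succ_self))
        (fun m hm => h1 m (hm.trans n.lt_succ_self)), Function.iterate_succ_apply]
    ring

theorem eq_zero_of_unitIntervalInner_self_eq_zero {p : ℝ[X]} (h : unitIntervalInner p p = 0) :
    p = 0 := by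
  by_contra hp
  obtain ⟨c, hc, hpc⟩ : ∃ c ∈ Set.Icc (0 : ℝ) 1, p.eval c ≠ 0 := by
    by_contra! hroots
    exact hp (eq_zero_of_infinite_isRoot p ((Set.Icc_infinite zero_lt_one).mono hroots))
  exact (intervalIntegral.integral_pos zero_lt_one
    (p.continuous.mul p.continuous).continuousOn (fun x _ => mul_self_nonneg _)
    ⟨c, hc, mul_self_pos.2 hpc⟩).ne' h

/-- The shifted Legendre polynomial over `ℝ`, with Mathlib's normalization `Pₙ(0) = 1` and
`Pₙ(1) = (-1)ⁿ`. -/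
noncomputable def legendre (n : ℕ) : ℝ[X] := (shiftedLegendre n).map (Int.castRingHom ℝ)

theorem factorial_smul_legendre (n : ℕ) :
    (n ! : ℝ) • legendre n = derivative^[n] ((X * (1 - X)) ^ n) := by
  have h := congrArg (map (Int.castRingHom ℝ)) (factorial_mul_shiftedLegendre_eq n)
  rw [← iterate_derivative_map] at h
  simpa [legendre, mul_pow, smul_eq_C_mul] using h

theorem degree_legendre_le (n : ℕ) : (legendre n).degree ≤ n :=
  degree_map_le.trans (degree_shiftedLegendre n).le

theorem legendre_eval_zero (n : ℕ) : (legendre n).eval 0 = 1 := by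
  simp [legendre, ← coeff_zero_eq_eval_zero, coeff_shiftedLegendre]

theorem legendre_eval_one (n : ℕ) : (legendre n).eval 1 = (-1) ^ n := by
  have h := shiftedLegendre_eval_symm n (1 : ℝ)
  have h0 := legendre_eval_zero n
  simp only [legendre, eval_map, aeval_def, sub_self, algebraMap_int_eq] at h h0 ⊢
  rw [h, h0, mul_one]

theorem unitIntervalInner_legendre_eq_zero_of_degree_lt {n : ℕ} {r : ℝ[X]} (hr : r.degree < n) :
    unitIntervalInner (legendre n) r = 0 := by
  have base_dvd {m : ℕ} (hm : m < n) :
      (X * (1 - X) : ℝ[X]) ∣ derivative^[m] ((X * (1 - X)) ^ n) :=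
    (dvd_pow_self _ (Nat.sub_ne_zero_of_lt hm)).trans (pow_sub_dvd_iterate_derivative_pow _ n m)
  have h : (n ! : ℝ) * unitIntervalInner (legendre n) r = 0 := by
    rw [← smul_eq_mul, ← LinearMap.smul_apply, ← map_smul, factorial_smul_legendre,
      unitIntervalInner_iterate_derivative_left
        (fun m hm => eval_eq_zero_of_dvd_of_eval_eq_zero (base_dvd hm) (by simp))
        (fun m hm => eval_eq_zero_of_dvd_of_eval_eq_zero (base_dvd hm) (by simp)),
      iterate_derivative_eq_zero_of_degree_lt hr, map_zero, mul_zero]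
  exact (mul_eq_zero.1 h).resolve_left (by positivity)

theorem unitIntervalInner_legendre_of_ne {m n : ℕ} (hmn : m ≠ n) :
    unitIntervalInner (legendre m) (legendre n) = 0 := by
  rcases hmn.lt_or_gt with h | h
  · rw [unitIntervalInner_comm]
    exact unitIntervalInner_legendre_eq_zero_of_degree_lt
      ((degree_legendre_le m).trans_lt (by exact_mod_cast h))
  · exact unitIntervalInner_legendre_eq_zero_of_degree_lt
      ((degree_legendre_le n).trans_lt (by exact_mod_cast h))

theorem degree_X_mul_derivative_sub_natCast_smul_lt {R : Type*} [CommRing R] {p : R[X]} {n : ℕ}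
    (hp : p.degree ≤ n) : (X * derivative p - (n : R) • p).degree < (n : WithBot ℕ) := by
  rw [degree_lt_iff_coeff_zero]
  intro m hm
  have hcoeff : (X * derivative p).coeff m = m * p.coeff m := by
    cases m with
    | zero => simp
    | succ m => rw [coeff_X_mul, coeff_derivative]; push_cast; ring
  rw [coeff_sub, coeff_smul, hcoeff, smul_eq_mul]
  rcases hm.eq_or_lt with rfl | hlt
  · exact sub_self _
  · rw [coeff_eq_zero_of_degree_lt (hp.trans_lt (by exact_mod_cast hlt)), mul_zero, mul_zero,
      sub_zero]

theorem unitIntervalInner_legendre_self (n : ℕ) :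
    unitIntervalInner (legendre n) (legendre n) = 1 / (2 * n + 1) := by
  set P := legendre n with hP
  -- `x P' - n P` has degree below `n`, so it is orthogonal to `P`.
  have hEuler : unitIntervalInner P (X * derivative P) = n * unitIntervalInner P P := by
    have h := unitIntervalInner_legendre_eq_zero_of_degree_lt
      (degree_X_mul_derivative_sub_natCast_smul_lt (degree_legendre_le n))
    rwa [map_sub, map_smul, smul_eq_mul, sub_eq_zero] at h
  have hparts := unitIntervalInner_derivative_left (X * P) P
  have hmove : unitIntervalInner (X * P) (derivative P) = unitIntervalInner P (X * derivative P) :=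
    by simp only [unitIntervalInner_apply, eval_mul, eval_X]; congr 1; ext x; ring
  have hend : P.eval 1 * P.eval 1 = 1 := by
    rw [hP, legendre_eval_one, ← mul_pow, neg_one_mul, neg_neg, one_pow]
  rw [derivative_mul, derivative_X, one_mul, map_add, LinearMap.add_apply,
    unitIntervalInner_comm (X * derivative P) P, hmove, hEuler, eval_mul, eval_mul, eval_X,
    eval_X, one_mul, hend] at hparts
  rw [eq_div_iff (by positivity)]
  linarith

theorem derivative_derivative_X_mul_one_sub_X_pow (n : ℕ) :
    derivative (derivative ((X * (1 - X) : ℝ[X]) ^ (n + 2))) =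
      (n + 2 : ℝ) • ((n + 1 : ℝ) • (X * (1 - X)) ^ n
        - (2 * (2 * n + 3) : ℝ) • (X * (1 - X)) ^ (n + 1)) := by
  simp only [derivative_pow, derivative_mul, derivative_sub, derivative_one, derivative_X,
    smul_eq_C_mul, map_add, map_mul, map_natCast, map_ofNat, map_one,
    map_zero, derivative_natCast]
  push_cast
  ring

theorem derivative_legendre_sub_legendre (n : ℕ) :
    derivative (legendre n - legendre (n + 2)) = (2 * (2 * n + 3) : ℝ) • legendre (n + 1) := by
  have hfac : ((n + 2)! : ℝ) ≠ 0 := by positivity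
  have h := congrArg derivative (factorial_smul_legendre (n + 2))
  rw [Function.iterate_succ_apply, Function.iterate_succ_apply,
    derivative_derivative_X_mul_one_sub_X_pow, iterate_derivative_smul, iterate_derivative_sub,
    iterate_derivative_smul, iterate_derivative_smul, ← factorial_smul_legendre,
    derivative_smul, derivative_smul, derivative_sub, derivative_smul, derivative_smul,
    derivative_smul, ← Function.iterate_succ_apply' derivative n, ← factorial_smul_legendre] at h
  refine smul_right_injective _ hfac ?_
  simp only [derivative_sub, smul_sub]
  rw [h, Nat.factorial_succ, Nat.factorial_succ]
  push_cast
  module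

/-- The reconstruction error `V - Û` on `[0, 1]` with `q = n + 2` and `j = 1`: the antiderivative of
`(Pₙ₊₁ + Pₙ₊₂) / 2` vanishing at both endpoints, expanded in Legendre polynomials. -/
noncomputable def unitReconError (n : ℕ) : ℝ[X] :=
  (1 / (4 * (2 * n + 3)) : ℝ) • (legendre n - legendre (n + 2)) +
    (1 / (4 * (2 * n + 5)) : ℝ) • (legendre (n + 1) - legendre (n + 3))

theorem derivative_unitReconError (n : ℕ) :
    derivative (unitReconError n) = (1 / 2 : ℝ) • (legendre (n + 1) + legendre (n + 2)) := by
  have h3 : (2 * n + 3 : ℝ) ≠ 0 := by positivity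
  have h5 : (2 * n + 5 : ℝ) ≠ 0 := by positivity
  have hsucc := derivative_legendre_sub_legendre (n + 1)
  rw [show (2 * (2 * (n + 1 : ℕ) + 3) : ℝ) = 2 * (2 * n + 5) by push_cast; ring] at hsucc
  rw [unitReconError, derivative_add, derivative_smul, derivative_smul,
    derivative_legendre_sub_legendre, hsucc, smul_smul, smul_smul, smul_add]
  congr 2 <;> field_simp <;> norm_num

theorem unitReconError_eval_zero (n : ℕ) : (unitReconError n).eval 0 = 0 := by
  simp [unitReconError, legendre_eval_zero]

theorem unitReconError_eval_one (n : ℕ) : (unitReconError n).eval 1 = 0 := by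
  norm_num [unitReconError, legendre_eval_one, pow_add]

theorem derivative_unitReconError_eval_zero (n : ℕ) :
    (derivative (unitReconError n)).eval 0 = 1 := by
  norm_num [derivative_unitReconError, legendre_eval_zero]

theorem derivative_unitReconError_eval_one (n : ℕ) :
    (derivative (unitReconError n)).eval 1 = 0 := by
  simp [derivative_unitReconError, legendre_eval_one, pow_succ]

theorem degree_unitReconError_le (n : ℕ) : (unitReconError n).degree ≤ (n + 3 : ℕ) := by
  have degree_le {m : ℕ} (hm : m ≤ n + 3) : (legendre m).degree ≤ (n + 3 : ℕ) :=
    (degree_legendre_le m).trans (by exact_mod_cast hm)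
  have degree_sub_le' {k l : ℕ} (hk : k ≤ n + 3) (hl : l ≤ n + 3) (c : ℝ) :
      (c • (legendre k - legendre l)).degree ≤ (n + 3 : ℕ) :=
    (degree_smul_le _ _).trans ((degree_sub_le _ _).trans (max_le (degree_le hk) (degree_le hl)))
  exact (degree_add_le _ _).trans
    (max_le (degree_sub_le' (by omega) (by omega) _) (degree_sub_le' (by omega) (by omega) _))

theorem unitIntervalInner_derivative_derivative_unitReconError {n : ℕ} {w : ℝ[X]}
    (hw : w.natDegree < n + 2) :
    unitIntervalInner (derivative (derivative (unitReconError n))) w = -w.eval 0 := by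
  have hw' : (derivative w).natDegree < n + 1 := by
    have := natDegree_derivative_le w
    omega
  have horth : unitIntervalInner (derivative (unitReconError n)) (derivative w) = 0 := by
    have h1 : (derivative w).degree < (n + 1 : ℕ) :=
      degree_le_natDegree.trans_lt (by exact_mod_cast hw')
    have h2 : (derivative w).degree < (n + 2 : ℕ) :=
      h1.trans (by exact_mod_cast (n + 1).lt_succ_self)
    rw [derivative_unitReconError, map_smul, LinearMap.smul_apply, map_add, LinearMap.add_apply,
      unitIntervalInner_legendre_eq_zero_of_degree_lt h1,
      unitIntervalInner_legendre_eq_zero_of_degree_lt h2, add_zero, smul_zero]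
  rw [unitIntervalInner_derivative_left, horth, derivative_unitReconError_eval_zero,
    derivative_unitReconError_eval_one]
  ring

theorem unitIntervalInner_derivative_unitReconError_self (n : ℕ) :
    unitIntervalInner (derivative (unitReconError n)) (derivative (unitReconError n)) =
      (n + 2) / ((2 * n + 3) * (2 * n + 5)) := by
  simp only [derivative_unitReconError, map_smul, map_add, LinearMap.smul_apply,
    LinearMap.add_apply, unitIntervalInner_legendre_self, smul_eq_mul,
    unitIntervalInner_legendre_of_ne (n + 1).lt_succ_self.ne,
    unitIntervalInner_legendre_of_ne (n + 1).lt_succ_self.ne']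
  push_cast
  field_simp
  ring

theorem unitIntervalInner_unitReconError_self (n : ℕ) :
    unitIntervalInner (unitReconError n) (unitReconError n) =
      (n + 2) / (2 * (2 * n + 1) * (2 * n + 3) * (2 * n + 5) * (2 * n + 7)) := by
  simp only [unitReconError, map_add, map_smul, map_sub, LinearMap.add_apply,
    LinearMap.smul_apply, LinearMap.sub_apply, smul_eq_mul, unitIntervalInner_legendre_self,
    unitIntervalInner_legendre_of_ne, ne_eq, Nat.left_eq_add, Nat.add_eq_left,
    Nat.add_left_cancel_iff, OfNat.ofNat_ne_zero, OfNat.ofNat_ne_one, OfNat.one_ne_ofNat,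
    one_ne_zero, reduceEqDiff, not_false_eq_true, Nat.succ_ne_self]
  push_cast
  field_simp
  ring

theorem eq_zero_of_derivative_eq_zero_of_eval_eq_zero {R : Type*} [Semiring R]
    [IsAddTorsionFree R] {p : R[X]} {x : R} (hderiv : derivative p = 0) (hx : p.eval x = 0) :
    p = 0 := by
  rw [eq_C_of_derivative_eq_zero hderiv, eval_C] at hx
  rw [eq_C_of_derivative_eq_zero hderiv, hx, C_0]

theorem eq_smul_unitReconError {n : ℕ} {κ : ℝ} {p : ℝ[X]} (hdeg : p.degree ≤ (n + 3 : ℕ))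
    (h0 : p.eval 0 = 0) (h1 : (derivative p).eval 0 = κ)
    (htest : ∀ w : ℝ[X], w.natDegree < n + 2 →
      unitIntervalInner (derivative (derivative p)) w = -(κ * w.eval 0)) :
    p = κ • unitReconError n := by
  set g := p - κ • unitReconError n with hg
  have hg'' : (derivative (derivative g)).natDegree < n + 2 := by
    have : g.natDegree ≤ n + 3 := natDegree_le_of_degree_le <| (degree_sub_le _ _).trans <|
      max_le hdeg ((degree_smul_le _ _).trans (degree_unitReconError_le n))
    have := natDegree_derivative_le g
    have := natDegree_derivative_le (derivative g)
    omega
  have horth {w : ℝ[X]} (hw : w.natDegree < n + 2) :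
      unitIntervalInner (derivative (derivative g)) w = 0 := by
    rw [hg, derivative_sub, derivative_sub, derivative_smul, derivative_smul, map_sub, map_smul,
      LinearMap.sub_apply, LinearMap.smul_apply, htest w hw,
      unitIntervalInner_derivative_derivative_unitReconError hw, smul_eq_mul]
    ring
  have hg''_zero : derivative (derivative g) = 0 :=
    eq_zero_of_unitIntervalInner_self_eq_zero (horth hg'')
  have hg'_zero : derivative g = 0 :=
    eq_zero_of_derivative_eq_zero_of_eval_eq_zero (x := 0) hg''_zero (by
      simp [hg, h1, derivative_unitReconError_eval_zero])
  have hg_zero : g = 0 :=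
    eq_zero_of_derivative_eq_zero_of_eval_eq_zero (x := 0) hg'_zero (by
      simp [hg, h0, unitReconError_eval_zero])
  exact sub_eq_zero.1 hg_zero

theorem comp_add_mul_eq_smul_unitReconError {a b : ℝ} (hab : a ≠ b) {n : ℕ} {κ : ℝ} {p : ℝ[X]}
    (hdeg : p.degree ≤ (n + 3 : ℕ)) (ha : p.eval a = 0) (ha' : (derivative p).eval a = κ)
    (htest : ∀ w : ℝ[X], w.natDegree < n + 2 →
      ∫ t in a..b, (derivative (derivative p)).eval t * w.eval t = -(κ * w.eval a)) :
    p.comp (C a + C (b - a) * X) = ((b - a) * κ) • unitReconError n := by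
  have hτ : b - a ≠ 0 := sub_ne_zero.2 hab.symm
  have hderiv (r : ℝ[X]) : derivative (r.comp (C a + C (b - a) * X)) =
      (b - a) • (derivative r).comp (C a + C (b - a) * X) := by
    rw [derivative_comp]
    simp [smul_eq_C_mul]
  apply eq_smul_unitReconError
  · refine degree_le_of_natDegree_le (natDegree_comp_le.trans ?_)
    have hlin : (C a + C (b - a) * X).natDegree ≤ 1 := by compute_degree
    exact (Nat.mul_le_mul (natDegree_le_of_degree_le hdeg) hlin).trans (mul_one _).le
  · simp [ha]
  · rw [hderiv]
    simp [ha']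
  · intro w hw
    let w' : ℝ[X] := w.comp (C (b - a)⁻¹ * (X - C a))
    have hw' : w'.natDegree < n + 2 := by
      refine natDegree_comp_le.trans_lt (lt_of_le_of_lt ?_ hw)
      have hlin : (C (b - a)⁻¹ * (X - C a)).natDegree ≤ 1 := by compute_degree
      exact (Nat.mul_le_mul_left _ hlin).trans (mul_one _).le
    have hscale : (b - a) * ∫ s in (0 : ℝ)..1,
          (derivative (derivative p)).eval (a + (b - a) * s) * w.eval s =
        -(κ * w.eval 0) := by
      have h := intervalIntegral.smul_integral_comp_add_mul (a := 0) (b := 1)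
        (fun t => (derivative (derivative p)).eval t * w'.eval t) (b - a) a
      rw [mul_zero, add_zero, mul_one, add_sub_cancel, htest w' hw'] at h
      simpa [w', hτ] using h
    simp only [hderiv, map_smul, LinearMap.smul_apply, smul_eq_mul,
      unitIntervalInner_apply, eval_comp, eval_add, eval_mul, eval_C, eval_X, hscale]
    ring

theorem c1_sq_eq_unitIntervalInner (n : ℕ) :
    c1 (n + 2) ^ 2 =
      unitIntervalInner (derivative (unitReconError n)) (derivative (unitReconError n)) := by
  have hshift : ((n + 2 : ℕ) : ℝ) / ((2 * (n + 2 : ℕ) - 1) * (2 * (n + 2 : ℕ) + 1)) =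
      (n + 2) / ((2 * n + 3) * (2 * n + 5)) := by
    push_cast
    ring_nf
  rw [c1, hshift, Real.sq_sqrt (by positivity), unitIntervalInner_derivative_unitReconError_self]

theorem c2_nonneg (q : ℕ) : 0 ≤ c2 q := by
  unfold c2
  split_ifs <;> exact Real.sqrt_nonneg _

theorem unitIntervalInner_unitReconError_self_le_c2_sq (n : ℕ) :
    unitIntervalInner (unitReconError n) (unitReconError n) ≤ c2 (n + 2) ^ 2 := by
  rw [unitIntervalInner_unitReconError_self]
  rcases Nat.eq_zero_or_pos n with rfl | hn
  · rw [c2, if_pos rfl, Real.sq_sqrt (by norm_num)]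
    norm_num
  · have hshift : ((n + 2 : ℕ) : ℝ) / (4 * ((n + 2 : ℕ) - 2) * ((n + 2 : ℕ) - 1) *
          (2 * (n + 2 : ℕ) - 1) * (2 * (n + 2 : ℕ) + 1)) =
        (n + 2) / (4 * n * (n + 1) * (2 * n + 3) * (2 * n + 5)) := by
      push_cast
      ring_nf
    rw [c2, if_neg (by omega), hshift, Real.sq_sqrt (by positivity)]
    refine div_le_div_of_nonneg_left (by positivity) (by positivity) ?_
    have hfactor : (4 * n * (n + 1) : ℝ) ≤ 2 * (2 * n + 1) * (2 * n + 7) := by nlinarith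
    calc (4 * n * (n + 1) * (2 * n + 3) * (2 * n + 5) : ℝ)
        ≤ 2 * (2 * n + 1) * (2 * n + 7) * (2 * n + 3) * (2 * n + 5) := by gcongr
      _ = _ := by ring

end Legendre

section HilbertValued

open Polynomial

variable {H : Type*} [NormedAddCommGroup H]

section PolyEval

variable [NormedSpace ℝ H]

theorem polyEval_sub (k : ℕ) (c d : ℕ → H) (t : ℝ) :
    polyEval k (c - d) t = polyEval k c t - polyEval k d t := by
  simp only [polyEval, Pi.sub_apply, smul_sub, Finset.sum_sub_distrib]

theorem dC_sub (c d : ℕ → H) : dC (c - d) = dC c - dC d := by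
  funext i
  simp only [dC, Pi.sub_apply, smul_sub]

theorem dC_eq_zero_of_lt {k : ℕ} {c : ℕ → H} (hc : ∀ i, k < i → c i = 0) :
    ∀ i, k < i → dC c i = 0 := fun i hi => by
  rw [dC, hc (i + 1) (by omega), smul_zero]

theorem continuous_polyEval (k : ℕ) (c : ℕ → H) : Continuous (polyEval k c) := by
  unfold polyEval
  fun_prop

theorem hasDerivAt_polyEval {k : ℕ} {c : ℕ → H} (hc : ∀ i, k < i → c i = 0) (t : ℝ) :
    HasDerivAt (polyEval k c) (polyEval k (dC c) t) t := by
  have hsum := HasDerivAt.fun_sum (u := Finset.range (k + 1)) fun i _ =>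
    (hasDerivAt_pow i t).smul_const (c i)
  have hshift : polyEval k (dC c) t =
      ∑ i ∈ Finset.range (k + 1), ((i : ℝ) * t ^ (i - 1)) • c i := by
    have hlast : dC c k = 0 := by rw [dC, hc (k + 1) k.lt_succ_self, smul_zero]
    rw [polyEval, Finset.sum_range_succ, hlast, smul_zero, Finset.sum_range_succ']
    simp only [dC, smul_smul, Nat.cast_zero, Nat.cast_succ, mul_zero, zero_smul,
      Nat.add_sub_cancel, mul_comm]
  rw [hshift]
  exact hsum

end PolyEval

variable [InnerProductSpace ℝ H]

/-- The scalar polynomial `t ↦ ⟪h, C(t)⟫`, where `C` is the `H`-valued polynomial of degree at most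
`k` with coefficients `c`; testing against all `h` reduces identities in `H` to `ℝ[X]`. -/
noncomputable def innerPoly (k : ℕ) (h : H) (c : ℕ → H) : ℝ[X] :=
  ∑ i ∈ Finset.range (k + 1), monomial i ⟪h, c i⟫

theorem innerPoly_eval (k : ℕ) (h : H) (c : ℕ → H) (t : ℝ) :
    (innerPoly k h c).eval t = ⟪h, polyEval k c t⟫ := by
  simp only [innerPoly, polyEval, eval_finsetSum, eval_monomial, inner_sum, inner_smul_right,
    mul_comm]

theorem degree_innerPoly_le (k : ℕ) (h : H) (c : ℕ → H) : (innerPoly k h c).degree ≤ k := by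
  refine degree_le_of_natDegree_le (natDegree_sum_le_of_forall_le _ _ fun i hi => ?_)
  exact (natDegree_monomial_le _).trans (Finset.mem_range_succ_iff.1 hi)

theorem derivative_innerPoly {k : ℕ} {c : ℕ → H} (hc : ∀ i, k < i → c i = 0) (h : H) :
    derivative (innerPoly k h c) = innerPoly k h (dC c) := by
  refine Polynomial.funext fun t => ?_
  have hinner := (hasDerivAt_const t h).inner ℝ (hasDerivAt_polyEval hc t)
  simp only [← innerPoly_eval] at hinner
  simpa [innerPoly_eval] using ((innerPoly k h c).hasDerivAt t).unique hinner

theorem polyEval_coeff_smul {k : ℕ} {w : ℝ[X]} (hw : w.natDegree ≤ k) (h : H) (t : ℝ) :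
    polyEval k (fun i => w.coeff i • h) t = w.eval t • h := by
  simp only [polyEval, eval_eq_sum_range' (Nat.lt_succ_of_le hw), Finset.sum_smul, smul_smul,
    mul_comm]

namespace IsTimeRecon

variable {t₀ t₁ : ℝ} {q n : ℕ} {v u : ℕ → H} {j : H}

theorem coeff_sub_eq_zero (hu : IsTimeRecon t₀ t₁ q v j u) (hv : ∀ i, q + 1 < i → v i = 0) :
    ∀ i, q + 1 < i → (v - u) i = 0 := fun i hi => by
  rw [Pi.sub_apply, hv i hi, hu.1 i hi, sub_zero]

theorem integral_innerPoly_mul (hu : IsTimeRecon t₀ t₁ q v j u)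
    (hv : ∀ i, q + 1 < i → v i = 0) (h : H) {w : ℝ[X]} (hw : w.natDegree < q) :
    ∫ t in t₀..t₁, (derivative (derivative (innerPoly (q + 1) h (v - u)))).eval t * w.eval t =
      -(⟪h, j⟫ * w.eval t₀) := by
  have hcoeff := hu.coeff_sub_eq_zero hv
  have htest := hu.2.1 (fun i => w.coeff i • h) fun i hi => by
    rw [coeff_eq_zero_of_natDegree_lt (hw.trans_le hi), zero_smul]
  simp only [polyEval_coeff_smul (show w.natDegree ≤ q + 1 by omega), inner_smul_right] at htest
  rw [real_inner_comm j h, mul_comm, ← htest, ← intervalIntegral.integral_neg]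
  congr 1 with t
  rw [derivative_innerPoly hcoeff, derivative_innerPoly (dC_eq_zero_of_lt hcoeff), innerPoly_eval,
    dC_sub, dC_sub, polyEval_sub, real_inner_comm, ← neg_sub, inner_neg_left]
  ring

theorem innerPoly_comp_eq (hu : IsTimeRecon t₀ t₁ (n + 2) v j u)
    (hv : ∀ i, n + 3 < i → v i = 0) (h01 : t₀ ≠ t₁) (h : H) :
    (innerPoly (n + 3) h (v - u)).comp (C t₀ + C (t₁ - t₀) * X) =
      ((t₁ - t₀) * ⟪h, j⟫) • unitReconError n := by
  refine comp_add_mul_eq_smul_unitReconError h01 (degree_innerPoly_le _ _ _) ?_ ?_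
    fun w hw => hu.integral_innerPoly_mul hv h hw
  · rw [innerPoly_eval, polyEval_sub, hu.2.2.1, sub_self, inner_zero_right]
  · rw [derivative_innerPoly (hu.coeff_sub_eq_zero hv), innerPoly_eval, dC_sub, polyEval_sub,
      hu.2.2.2, sub_sub_cancel]

theorem polyEval_sub_add_mul (hu : IsTimeRecon t₀ t₁ (n + 2) v j u)
    (hv : ∀ i, n + 3 < i → v i = 0) (h01 : t₀ ≠ t₁) (s : ℝ) :
    polyEval (n + 3) (v - u) (t₀ + (t₁ - t₀) * s) =
      ((t₁ - t₀) * (unitReconError n).eval s) • j := by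
  refine ext_inner_left ℝ fun h => ?_
  have heval := congrArg (eval s) (hu.innerPoly_comp_eq hv h01 h)
  simp only [eval_comp, eval_add, eval_mul, eval_C, eval_X, innerPoly_eval, eval_smul,
    smul_eq_mul] at heval
  rw [heval, inner_smul_right]
  ring

theorem polyEval_dC_sub_add_mul (hu : IsTimeRecon t₀ t₁ (n + 2) v j u)
    (hv : ∀ i, n + 3 < i → v i = 0) (h01 : t₀ ≠ t₁) (s : ℝ) :
    polyEval (n + 3) (dC (v - u)) (t₀ + (t₁ - t₀) * s) =
      (derivative (unitReconError n)).eval s • j := by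
  refine ext_inner_left ℝ fun h => mul_left_cancel₀ (sub_ne_zero.2 h01.symm) ?_
  have heval := congrArg (fun p => (derivative p).eval s) (hu.innerPoly_comp_eq hv h01 h)
  rw [derivative_comp, derivative_innerPoly (hu.coeff_sub_eq_zero hv)] at heval
  simp only [derivative_add, derivative_C, derivative_C_mul, derivative_X, zero_add, mul_one,
    eval_mul, eval_C, eval_comp, eval_add, eval_X, innerPoly_eval, derivative_smul, eval_smul,
    smul_eq_mul] at heval
  rw [heval, inner_smul_right]
  ring

theorem polyEval_sub_left (hu : IsTimeRecon t₀ t₁ q v j u) :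
    polyEval (q + 1) (v - u) t₀ = 0 := by
  rw [polyEval_sub, hu.2.2.1, sub_self]

theorem polyEval_sub_right (hu : IsTimeRecon t₀ t₁ (n + 2) v j u)
    (hv : ∀ i, n + 3 < i → v i = 0) (h01 : t₀ ≠ t₁) :
    polyEval (n + 3) (v - u) t₁ = 0 := by
  simpa [unitReconError_eval_one] using hu.polyEval_sub_add_mul hv h01 1

theorem integral_norm_sq_polyEval_sub (hu : IsTimeRecon t₀ t₁ (n + 2) v j u)
    (hv : ∀ i, n + 3 < i → v i = 0) (h01 : t₀ ≠ t₁) :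
    ∫ t in t₀..t₁, ‖polyEval (n + 3) (v - u) t‖ ^ 2 =
      unitIntervalInner (unitReconError n) (unitReconError n) * (t₁ - t₀) ^ 3 * ‖j‖ ^ 2 := by
  have hscale := intervalIntegral.smul_integral_comp_add_mul (a := 0) (b := 1)
    (fun t => ‖polyEval (n + 3) (v - u) t‖ ^ 2) (t₁ - t₀) t₀
  simp only [mul_zero, add_zero, mul_one, add_sub_cancel] at hscale
  rw [← hscale]
  simp only [hu.polyEval_sub_add_mul hv h01, norm_smul, mul_pow, Real.norm_eq_abs, sq_abs,
    intervalIntegral.integral_mul_const, intervalIntegral.integral_const_mul,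
    unitIntervalInner_apply, smul_eq_mul, ← sq]
  ring

theorem integral_norm_sq_polyEval_dC_sub (hu : IsTimeRecon t₀ t₁ (n + 2) v j u)
    (hv : ∀ i, n + 3 < i → v i = 0) (h01 : t₀ ≠ t₁) :
    ∫ t in t₀..t₁, ‖polyEval (n + 3) (dC (v - u)) t‖ ^ 2 =
      unitIntervalInner (derivative (unitReconError n)) (derivative (unitReconError n)) *
        (t₁ - t₀) * ‖j‖ ^ 2 := by
  have hscale := intervalIntegral.smul_integral_comp_add_mul (a := 0) (b := 1)
    (fun t => ‖polyEval (n + 3) (dC (v - u)) t‖ ^ 2) (t₁ - t₀) t₀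
  simp only [mul_zero, add_zero, mul_one, add_sub_cancel] at hscale
  rw [← hscale]
  simp only [hu.polyEval_dC_sub_add_mul hv h01, norm_smul, mul_pow, Real.norm_eq_abs, sq_abs,
    intervalIntegral.integral_mul_const, unitIntervalInner_apply, smul_eq_mul, ← sq]
  ring

theorem iSup_norm_sq_le_sqrt_integral_mul_sqrt_integral (hu : IsTimeRecon t₀ t₁ (n + 2) v j u)
    (hv : ∀ i, n + 3 < i → v i = 0) (h01 : t₀ < t₁) :
    (⨆ t : Set.Icc t₀ t₁, ‖polyEval (n + 3) (v - u) t‖) ^ 2 ≤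
      √(∫ t in t₀..t₁, ‖polyEval (n + 3) (v - u) t‖ ^ 2) *
        √(∫ t in t₀..t₁, ‖polyEval (n + 3) (dC (v - u)) t‖ ^ 2) :=
  iSup_norm_sq_le_sqrt_mul_sqrt h01.le (continuous_polyEval _ _).continuousOn
    (fun t _ => hasDerivAt_polyEval (hu.coeff_sub_eq_zero hv) t)
    (continuous_polyEval _ _).continuousOn hu.polyEval_sub_left (hu.polyEval_sub_right hv h01.ne)

theorem sqrt_integral_mul_sqrt_integral_le (hu : IsTimeRecon t₀ t₁ (n + 2) v j u)
    (hv : ∀ i, n + 3 < i → v i = 0) (h01 : t₀ < t₁) :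
    √(∫ t in t₀..t₁, ‖polyEval (n + 3) (v - u) t‖ ^ 2) *
        √(∫ t in t₀..t₁, ‖polyEval (n + 3) (dC (v - u)) t‖ ^ 2) ≤
      c1 (n + 2) * c2 (n + 2) * ((t₁ - t₀) * ‖j‖) ^ 2 := by
  have hc1 : 0 ≤ c1 (n + 2) := Real.sqrt_nonneg _
  have hc2 : 0 ≤ c2 (n + 2) := c2_nonneg _
  rw [hu.integral_norm_sq_polyEval_sub hv h01.ne, hu.integral_norm_sq_polyEval_dC_sub hv h01.ne,
    ← c1_sq_eq_unitIntervalInner, ← Real.sqrt_mul' _ (by positivity)]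
  refine Real.sqrt_le_iff.2 ⟨by positivity, ?_⟩
  calc _ ≤ c2 (n + 2) ^ 2 * (t₁ - t₀) ^ 3 * ‖j‖ ^ 2 *
        (c1 (n + 2) ^ 2 * (t₁ - t₀) * ‖j‖ ^ 2) := by
        gcongr
        exact unitIntervalInner_unitReconError_self_le_c2_sq n
    _ = _ := by ring

end IsTimeRecon

end HilbertValued

theorem time_reconstruction_Linfty_interpolation_bound_general
    {H : Type*} [NormedAddCommGroup H] [InnerProductSpace ℝ H]
    (t₀ t₁ : ℝ) (h01 : t₀ < t₁) (q : ℕ) (hq : 2 ≤ q)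
    (v : ℕ → H) (hv : ∀ i, q + 1 < i → v i = 0) (j : H)
    (u : ℕ → H) (hu : IsTimeRecon t₀ t₁ q v j u) :
    (⨆ t : Set.Icc t₀ t₁, ‖polyEval (q + 1) v t - polyEval (q + 1) u t‖) ^ 2
        ≤ Real.sqrt (∫ t in t₀..t₁, ‖polyEval (q + 1) v t - polyEval (q + 1) u t‖ ^ 2)
          * Real.sqrt
            (∫ t in t₀..t₁, ‖polyEval (q + 1) (dC v) t - polyEval (q + 1) (dC u) t‖ ^ 2) ∧
      (⨆ t : Set.Icc t₀ t₁, ‖polyEval (q + 1) v t - polyEval (q + 1) u t‖)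
        ≤ Real.sqrt (c1 q * c2 q) * (t₁ - t₀) * ‖j‖ := by
  obtain ⟨n, rfl⟩ : ∃ n, q = n + 2 := ⟨q - 2, by omega⟩
  simp only [← polyEval_sub, ← dC_sub]
  have hsup := hu.iSup_norm_sq_le_sqrt_integral_mul_sqrt_integral hv h01
  refine ⟨hsup, ?_⟩
  have hτj : 0 ≤ (t₁ - t₀) * ‖j‖ := mul_nonneg (sub_nonneg.2 h01.le) (norm_nonneg _)
  rw [mul_assoc, ← Real.sqrt_sq hτj, ← Real.sqrt_mul' _ (sq_nonneg _)]
  exact Real.le_sqrt_of_sq_le (hsup.trans (hu.sqrt_integral_mul_sqrt_integral_le hv h01))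

/-- L∞ bound for the time reconstruction error via interpolation:
`sup_{t ∈ I} ‖V - Û‖² ≤ (∫_I ‖V - Û‖²)^{1/2} (∫_I ‖V' - Û'‖²)^{1/2}`, and consequently
`sup_{t ∈ I} ‖V - Û‖ ≤ (c₁(q) c₂(q))^{1/2} τ ‖j‖`. -/
theorem time_reconstruction_Linfty_interpolation_bound
    {H : Type*} [NormedAddCommGroup H] [InnerProductSpace ℝ H] [CompleteSpace H]
    (t₀ t₁ : ℝ) (h01 : t₀ < t₁) (q : ℕ) (hq : 2 ≤ q)
    (v : ℕ → H) (hv : ∀ i, q < i → v i = 0) (j : H)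
    (u : ℕ → H) (hu : IsTimeRecon t₀ t₁ q v j u) :
    (⨆ t : Set.Icc t₀ t₁, ‖polyEval (q + 1) v t - polyEval (q + 1) u t‖) ^ 2
        ≤ Real.sqrt (∫ t in t₀..t₁, ‖polyEval (q + 1) v t - polyEval (q + 1) u t‖ ^ 2)
          * Real.sqrt
            (∫ t in t₀..t₁, ‖polyEval (q + 1) (dC v) t - polyEval (q + 1) (dC u) t‖ ^ 2) ∧
      (⨆ t : Set.Icc t₀ t₁, ‖polyEval (q + 1) v t - polyEval (q + 1) u t‖)
        ≤ Real.sqrt (c1 q * c2 q) * (t₁ - t₀) * ‖j‖ :=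
  time_reconstruction_Linfty_interpolation_bound_general t₀ t₁ h01 q hq v
    (fun i hi => hv i (by omega)) j u hu
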